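/- arXiv:2310.17735 — 2 statements merged into one kernel-verified Lean document; each statement's English description precedes it below -/
import Mathlib

section
/- Let X and A be finite nonempty sets, let P ∈ M_{X×X} be an orthogonal projection of rank k ≥ 1, and let Q ∈ M_{A×A} be an orthogonal projection. Define ω_qc(P ⇒ Q) = sup_{Γ∈Q_qc} (1/k) Tr(Γ(P) Q), where Q_qc is the set of quantum commuting QNS correlations over the quadruple (X, X, A, A). Then ω_qc(P ⇒ Q) = 1 if and only if there exists Γ ∈ Q_qc such that for every σ ∈ M_{X×X} with σ = P σ P one has Γ(σ) = Q Γ(σ) Q. -/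
open Matrix ContinuousLinearMap
open scoped Kronecker ComplexOrder ComplexInnerProductSpace

/-- A bundled complex Hilbert space. -/
structure HilbertC : Type 1 where
  carrier : Type
  [nacg : NormedAddCommGroup carrier]
  [ips : InnerProductSpace ℂ carrier]
  [cs : CompleteSpace carrier]

attribute [instance] HilbertC.nacg HilbertC.ips HilbertC.cs

/-- A stochastic operator matrix over `(X, A)` acting on a Hilbert space `H`. -/
def IsStochasticOperatorMatrix {X A : Type*} [Fintype X] [Fintype A] [DecidableEq X]
    {H : Type*} [NormedAddCommGroup H] [InnerProductSpace ℂ H]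
    (E : X → X → A → A → (H →L[ℂ] H)) : Prop :=
  (∀ ξ : X × A → H,
    0 ≤ ∑ p : X × A, ∑ q : X × A, (⟪ξ p, (E p.1 q.1 p.2 q.2) (ξ q)⟫ : ℂ)) ∧
  (∀ x x' : X, ∑ a : A, E x x' a a = if x = x' then 1 else 0)

/-- Quantum commuting QNS correlations over `(X, Y, A, B)`. -/
def IsQCCorrelation {X Y A B : Type} [Fintype X] [Fintype Y] [Fintype A] [Fintype B]
    [DecidableEq X] [DecidableEq Y]
    (Γ : Matrix (X × Y) (X × Y) ℂ →ₗ[ℂ] Matrix (A × B) (A × B) ℂ) : Prop :=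
  ∃ (ℍ : HilbertC) (ξ : ℍ.carrier)
    (E : X → X → A → A → (ℍ.carrier →L[ℂ] ℍ.carrier))
    (F : Y → Y → B → B → (ℍ.carrier →L[ℂ] ℍ.carrier)),
    ‖ξ‖ = 1 ∧
    IsStochasticOperatorMatrix E ∧ IsStochasticOperatorMatrix F ∧
    (∀ (x x' : X) (y y' : Y) (a a' : A) (b b' : B),
      Commute (E x x' a a') (F y y' b b')) ∧
    (∀ (x x' : X) (y y' : Y),
      Γ ((Matrix.single x x' (1 : ℂ)) ⊗ₖ (Matrix.single y y' (1 : ℂ)))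
        = Matrix.of fun p q => (⟪ξ, ((E x x' p.1 q.1) ∘L (F y y' p.2 q.2)) ξ⟫ : ℂ))


section MatrixPart
open scoped MatrixOrder Matrix.Norms.L2Operator

lemma aux_trace_rank {n : Type*} [Fintype n] [DecidableEq n] (P : Matrix n n ℂ)
    (h : P * P = P) : P.trace = (P.rank : ℂ) := by
  have hid : IsIdempotentElem (Matrix.toLin' P) := by
    unfold IsIdempotentElem
    rw [Module.End.mul_eq_comp, ← Matrix.toLin'_mul, h]
  have h1 := (LinearMap.isProj_range_iff_isIdempotentElem _).2 hid
  have := h1.trace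
  rw [Matrix.trace_toLin'_eq] at this
  rw [this, Matrix.rank, ← Matrix.toLin'_apply']

lemma aux_psd_zero {n : Type*} [Fintype n] [DecidableEq n] {M R : Matrix n n ℂ}
    (hM : M.PosSemidef) (h : Rᴴ * M * R = 0) : M * R = 0 := by
  obtain ⟨B, rfl⟩ := CStarAlgebra.nonneg_iff_eq_star_mul_self.1 (Matrix.nonneg_iff_posSemidef.2 hM)
  rw [Matrix.star_eq_conjTranspose] at *
  have : (B * R)ᴴ * (B * R) = 0 := by
    rw [Matrix.conjTranspose_mul, ← h]; simp only [Matrix.mul_assoc]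
  rw [Matrix.conjTranspose_mul_self_eq_zero] at this
  rw [Matrix.mul_assoc, this, Matrix.mul_zero]

variable {m n : Type*} [Fintype m] [DecidableEq m] [Fintype n] [DecidableEq n]
  (Γ : Matrix m m ℂ →ₗ[ℂ] Matrix n n ℂ)

lemma aux_proj_psd (P : Matrix m m ℂ) (hP : P.IsHermitian ∧ P * P = P) : P.PosSemidef := by
  have := Matrix.posSemidef_conjTranspose_mul_self P
  rwa [hP.1.eq, hP.2] at this

lemma aux_compl (Q : Matrix n n ℂ) (hQ : Q.IsHermitian ∧ Q * Q = Q) :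
    (1 - Q).IsHermitian ∧ (1 - Q) * (1 - Q) = 1 - Q := by
  refine ⟨Matrix.isHermitian_one.sub hQ.1, ?_⟩
  simp [mul_sub, sub_mul, hQ.2]

lemma aux_tr_compl (M Q : Matrix n n ℂ) (hQ : Q.IsHermitian ∧ Q * Q = Q) :
    M.trace - (M * Q).trace = ((1 - Q)ᴴ * M * (1 - Q)).trace := by
  have h := aux_compl Q hQ
  rw [h.1.eq, Matrix.trace_mul_comm ((1 - Q) * M), ← Matrix.mul_assoc, h.2, sub_mul, one_mul,
    Matrix.trace_sub, Matrix.trace_mul_comm Q]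

lemma aux_le (M Q : Matrix n n ℂ) (hQ : Q.IsHermitian ∧ Q * Q = Q) (hM : M.PosSemidef) :
    (M * Q).trace ≤ M.trace := by
  have := (hM.conjTranspose_mul_mul_same (1 - Q)).trace_nonneg
  rw [← aux_tr_compl M Q hQ] at this
  exact sub_nonneg.1 this

lemma aux_perfect (hpos : ∀ ρ : Matrix m m ℂ, ρ.PosSemidef → (Γ ρ).PosSemidef)
    (P : Matrix m m ℂ) (Q : Matrix n n ℂ)
    (hP : P.IsHermitian ∧ P * P = P) (hQ : Q.IsHermitian ∧ Q * Q = Q)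
    (h : (Γ P * Q).trace = (Γ P).trace) (σ : Matrix m m ℂ) (hσ : σ = P * σ * P) :
    Γ σ = Q * Γ σ * Q := by
  have h0 : (1 - Q)ᴴ * Γ P * (1 - Q) = 0 := by
    refine ((hpos P (aux_proj_psd P hP)).conjTranspose_mul_mul_same (1 - Q)).trace_eq_zero_iff.1 ?_
    rw [← aux_tr_compl _ Q hQ, h, sub_self]
  rw [hσ]
  generalize σ = τ
  have hτ : τ ∈ Submodule.span ℂ {a : Matrix m m ℂ | 0 ≤ a} := by
    rw [CStarAlgebra.span_nonneg]; trivial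
  induction hτ using Submodule.span_induction with
  | zero => simp
  | add x y _ _ hx hy =>
    rw [mul_add, add_mul, map_add, mul_add, add_mul, ← hx, ← hy]
  | smul c x _ hx =>
    rw [mul_smul_comm, smul_mul_assoc, map_smul, mul_smul_comm, smul_mul_assoc, ← hx]
  | mem x hx =>
    have hx : 0 ≤ x := hx
    have hx1 : x.PosSemidef := Matrix.nonneg_iff_posSemidef.1 hx
    have hs : x ≤ algebraMap ℝ (Matrix m m ℂ) ‖x‖ :=
      IsSelfAdjoint.le_algebraMap_norm_self (.of_nonneg hx)
    have h1 : (P * x * P).PosSemidef := by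
      have := hx1.conjTranspose_mul_mul_same P
      rwa [hP.1.eq] at this
    have h2 : ((‖x‖ : ℂ) • P - P * x * P).PosSemidef := by
      have := (Matrix.le_iff.1 hs).conjTranspose_mul_mul_same P
      rw [hP.1.eq, mul_sub, sub_mul] at this
      rw [Algebra.algebraMap_eq_smul_one, mul_smul_comm, smul_mul_assoc, mul_one, hP.2] at this
      exact this
    have h3 := hpos _ h2
    have h4 := h3.conjTranspose_mul_mul_same (1 - Q)
    have h5 := (hpos _ h1).conjTranspose_mul_mul_same (1 - Q)
    rw [map_sub, map_smul, mul_sub (1 - Q)ᴴ, sub_mul _ _ (1 - Q), mul_smul_comm, smul_mul_assoc, h0, smul_zero] at h4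
    have h6 : (1 - Q)ᴴ * Γ (P * x * P) * (1 - Q) = 0 :=
      le_antisymm (Matrix.le_iff.2 h4) (Matrix.nonneg_iff_posSemidef.2 h5)
    have h7 := aux_psd_zero (hpos _ h1) h6
    rw [mul_sub, mul_one, sub_eq_zero] at h7
    have h8 := congrArg Matrix.conjTranspose h7
    rw [Matrix.conjTranspose_mul, hQ.1.eq, (hpos _ h1).isHermitian.eq] at h8
    rw [← h8, ← h7]
end MatrixPart

section OperatorPart
variable {H : Type*} [NormedAddCommGroup H] [InnerProductSpace ℂ H]
variable {ι : Type*} [Fintype ι]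

/-- Block operator on a finite direct sum. -/
noncomputable def blk (M : ι → ι → H →L[ℂ] H) :
    PiLp 2 (fun _ : ι => H) →L[ℂ] PiLp 2 (fun _ : ι => H) :=
  ((PiLp.continuousLinearEquiv 2 ℂ (fun _ : ι => H)).symm :
      (ι → H) →L[ℂ] PiLp 2 (fun _ : ι => H)) ∘L
    (ContinuousLinearMap.pi fun i => ∑ j, M i j ∘L PiLp.proj 2 (fun _ : ι => H) j)

lemma blk_apply (M : ι → ι → H →L[ℂ] H) (v : PiLp 2 (fun _ : ι => H)) (i : ι) :
    blk M v i = ∑ j, M i j (v j) := by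
  simp [blk]

lemma blk_inner (M : ι → ι → H →L[ℂ] H) (v w : PiLp 2 (fun _ : ι => H)) :
    (⟪v, blk M w⟫ : ℂ) = ∑ i, ∑ j, ⟪v i, M i j (w j)⟫ := by
  simp [PiLp.inner_apply, blk_apply, inner_sum]

lemma blk_pos (M : ι → ι → H →L[ℂ] H)
    (h : ∀ v : ι → H, 0 ≤ ∑ i, ∑ j, (⟪v i, M i j (v j)⟫ : ℂ)) : (blk M).IsPositive := by
  rw [ContinuousLinearMap.isPositive_iff_complex]
  intro v
  have h1 := h v
  rw [← blk_inner] at h1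
  have h2 : (⟪blk M v, v⟫ : ℂ) = ⟪v, blk M v⟫ := by
    rw [← inner_conj_symm]
    exact Complex.conj_eq_iff_im.2 (Complex.nonneg_iff.1 h1).2.symm
  rw [h2]
  rw [Complex.nonneg_iff] at h1
  refine ⟨?_, h1.1⟩
  apply Complex.ext <;> simp
  exact h1.2

lemma prod_pos [CompleteSpace H] {p r : Type*} [Fintype p] [Fintype r] [DecidableEq p] [DecidableEq r]
    (E : p → p → H →L[ℂ] H) (F : r → r → H →L[ℂ] H)
    (hE : ∀ v : p → H, 0 ≤ ∑ i, ∑ j, (⟪v i, E i j (v j)⟫ : ℂ))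
    (hF : ∀ v : r → H, 0 ≤ ∑ i, ∑ j, (⟪v i, F i j (v j)⟫ : ℂ))
    (hc : ∀ i j k l, Commute (E i j) (F k l)) (v : p × r → H) :
    0 ≤ ∑ i, ∑ j, (⟪v i, E i.1 j.1 (F i.2 j.2 (v j))⟫ : ℂ) := by
  let E' := blk (fun i j : p × r => if i.2 = j.2 then E i.1 j.1 else 0)
  let F' := blk (fun i j : p × r => if i.1 = j.1 then F i.2 j.2 else 0)
  have hE' : E'.IsPositive := by
    apply blk_pos
    intro v
    have : ∑ i : p × r, ∑ j : p × r, (⟪v i, (if i.2 = j.2 then E i.1 j.1 else 0) (v j)⟫ : ℂ)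
        = ∑ k : r, ∑ i : p, ∑ j : p, ⟪v (i, k), E i j (v (j, k))⟫ := by
      rw [Fintype.sum_prod_type, Finset.sum_comm]
      refine Finset.sum_congr rfl fun k _ => Finset.sum_congr rfl fun i _ => ?_
      rw [Fintype.sum_prod_type]
      refine Finset.sum_congr rfl fun j _ => ?_
      rw [Finset.sum_eq_single k] <;> simp +contextual [eq_comm]
    rw [this]
    exact Finset.sum_nonneg fun k _ => hE fun i => v (i, k)
  have hF' : F'.IsPositive := by
    apply blk_pos
    intro v
    have : ∑ i : p × r, ∑ j : p × r, (⟪v i, (if i.1 = j.1 then F i.2 j.2 else 0) (v j)⟫ : ℂ)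
        = ∑ k : p, ∑ i : r, ∑ j : r, ⟪v (k, i), F i j (v (k, j))⟫ := by
      rw [Fintype.sum_prod_type]
      refine Finset.sum_congr rfl fun k _ => Finset.sum_congr rfl fun i _ => ?_
      rw [Fintype.sum_prod_type, Finset.sum_eq_single k]
      · simp
      · intro b _ hb
        simp [hb.symm]
      · simp
    rw [this]
    exact Finset.sum_nonneg fun k _ => hF fun i => v (k, i)
  have hEF : ∀ (v : PiLp 2 (fun _ : p × r => H)) i,
      E' (F' v) i = ∑ j, E i.1 j.1 (F i.2 j.2 (v j)) := by
    intro v i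
    rw [blk_apply, Fintype.sum_prod_type, Fintype.sum_prod_type]
    refine Finset.sum_congr rfl fun k _ => ?_
    rw [Finset.sum_eq_single i.2]
    · rw [blk_apply, Fintype.sum_prod_type, Finset.sum_eq_single k]
      · simp
      · intro b _ hb
        simp [hb.symm]
      · simp
    · intro b _ hb
      simp [hb.symm]
    · simp
  have hFE : ∀ (v : PiLp 2 (fun _ : p × r => H)) i,
      F' (E' v) i = ∑ j, F i.2 j.2 (E i.1 j.1 (v j)) := by
    intro v i
    rw [blk_apply, Fintype.sum_prod_type, Fintype.sum_prod_type, Finset.sum_comm,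
      Finset.sum_comm (s := (Finset.univ : Finset p))]
    refine Finset.sum_congr rfl fun k _ => ?_
    rw [Finset.sum_eq_single i.1]
    · rw [blk_apply, Fintype.sum_prod_type, Finset.sum_comm, Finset.sum_eq_single k]
      · simp
      · intro b _ hb
        simp [hb.symm]
      · simp
    · intro b _ hb
      simp [hb.symm]
    · simp
  have hcomm : Commute E' F' := by
    apply ContinuousLinearMap.ext
    intro v
    apply PiLp.ext
    intro i
    show E' (F' v) i = F' (E' v) i
    rw [hEF, hFE]
    refine Finset.sum_congr rfl fun j _ => ?_
    exact congrArg (fun T : H →L[ℂ] H => T (v j)) (hc i.1 j.1 i.2 j.2).eq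
  have hpos : 0 ≤ E' * F' :=
    Commute.mul_nonneg ((ContinuousLinearMap.nonneg_iff_isPositive _).2 hE')
      ((ContinuousLinearMap.nonneg_iff_isPositive _).2 hF') hcomm
  have := ((ContinuousLinearMap.nonneg_iff_isPositive _).1 hpos).inner_nonneg_right (WithLp.toLp 2 v)
  rw [PiLp.inner_apply] at this
  convert this using 2 with i _
  show _ = inner ℂ _ (E' (F' (WithLp.toLp 2 v)) i)
  rw [hEF, inner_sum]

lemma stoch_norm_le {X A : Type*} [Fintype X] [Fintype A] [DecidableEq X] [DecidableEq A]
    (E : X → X → A → A → (H →L[ℂ] H)) (hE : IsStochasticOperatorMatrix E) (x x' : X) (a a' : A) :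
    ‖E x x' a a'‖ ≤ 1 := by
  let T := blk (fun i j : X × A => E i.1 j.1 i.2 j.2)
  have hT : T.IsPositive := blk_pos _ hE.1
  have hs : ∀ (i j : X × A) (u v : H), (⟪(WithLp.toLp 2 (Pi.single i u) : PiLp 2 (fun _ : X × A => H)),
      T (WithLp.toLp 2 (Pi.single j v))⟫ : ℂ) = ⟪u, E i.1 j.1 i.2 j.2 v⟫ := by
    intro i j u v
    rw [blk_inner, Finset.sum_eq_single i, Finset.sum_eq_single j]
    · simp
    · intro b _ hb
      simp [Pi.single_eq_of_ne hb]
    · simp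
    · intro b _ hb
      simp [Pi.single_eq_of_ne hb]
    · simp
  have hd0 : ∀ (i : X × A) (u : H), 0 ≤ (⟪u, E i.1 i.1 i.2 i.2 u⟫ : ℂ).re := by
    intro i u
    have := hT.inner_nonneg_right (WithLp.toLp 2 (Pi.single i u))
    rw [hs] at this
    exact (Complex.nonneg_iff.1 this).1
  have hd : ∀ (i : X × A) (u : H), (⟪u, E i.1 i.1 i.2 i.2 u⟫ : ℂ).re ≤ ‖u‖ ^ 2 := by
    intro i u
    have h1 := congrArg (fun S : H →L[ℂ] H => (⟪u, S u⟫ : ℂ).re) (hE.2 i.1 i.1)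
    simp only [if_true, _root_.sum_apply, inner_sum, Complex.re_sum,
      one_apply_eq_self] at h1
    have h2 : (⟪u, u⟫ : ℂ).re = ‖u‖ ^ 2 := inner_self_eq_norm_sq (𝕜 := ℂ) u
    rw [← h2, ← h1]
    exact Finset.single_le_sum (f := fun c => (⟪u, E i.1 i.1 c c u⟫ : ℂ).re)
      (fun c _ => hd0 (i.1, c) u) (Finset.mem_univ i.2)
  refine ContinuousLinearMap.opNorm_le_bound _ zero_le_one fun v => ?_
  rw [one_mul]
  set w := E x x' a a' v with hw
  let u' : PiLp 2 (fun _ : X × A => H) := WithLp.toLp 2 (Pi.single (x, a) w)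
  let v' : PiLp 2 (fun _ : X × A => H) := WithLp.toLp 2 (Pi.single (x', a') v)
  have h1 := (Complex.nonneg_iff.1 (hT.inner_nonneg_right (u' - v'))).1
  have h2 : (⟪v', T u'⟫ : ℂ).re = (⟪u', T v'⟫ : ℂ).re := by
    rw [← hT.isSymmetric.apply_clm v' u']
    exact inner_re_symm (𝕜 := ℂ) _ _
  rw [map_sub, inner_sub_left, inner_sub_right, inner_sub_right, Complex.sub_re, Complex.sub_re,
    Complex.sub_re, h2, hs, hs, hs] at h1
  have h3 := hd (x, a) w
  have h4 := hd (x', a') v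
  have h5 : (⟪w, E x x' a a' v⟫ : ℂ).re = ‖w‖ ^ 2 := inner_self_eq_norm_sq (𝕜 := ℂ) w
  simp only at h1 h3 h4
  rw [h5] at h1
  exact (sq_le_sq₀ (norm_nonneg _) (norm_nonneg _)).1 (by linarith)
end OperatorPart

section UltraPart
open Filter Topology

/-- Bounded sequences. -/
def bddSeq (H : ℕ → HilbertC) : Submodule ℂ (∀ n, (H n).carrier) where
  carrier := {x | ∃ C : ℝ, ∀ n, ‖x n‖ ≤ C}
  add_mem' := by
    rintro x y ⟨C, hC⟩ ⟨D, hD⟩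
    exact ⟨C + D, fun n => (norm_add_le _ _).trans (add_le_add (hC n) (hD n))⟩
  zero_mem' := ⟨0, fun n => by simp⟩
  smul_mem' := by
    rintro c x ⟨C, hC⟩
    refine ⟨‖c‖ * C, fun n => ?_⟩
    rw [Pi.smul_apply, norm_smul]
    exact mul_le_mul_of_nonneg_left (hC n) (norm_nonneg _)

/-- Type synonym of the bounded sequences, which will carry the ultrafilter seminorm. -/
def UP (H : ℕ → HilbertC) : Type := bddSeq H

noncomputable instance (H : ℕ → HilbertC) : AddCommGroup (UP H) :=
  inferInstanceAs (AddCommGroup (bddSeq H))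
noncomputable instance (H : ℕ → HilbertC) : Module ℂ (UP H) :=
  inferInstanceAs (Module ℂ (bddSeq H))

/-- The coordinates of a bounded sequence. -/
def UP.val {H : ℕ → HilbertC} (x : UP H) (n : ℕ) : (H n).carrier := Subtype.val x n

lemma UP.add_val {H : ℕ → HilbertC} (x y : UP H) (n : ℕ) : (x + y).val n = x.val n + y.val n := rfl
lemma UP.smul_val {H : ℕ → HilbertC} (c : ℂ) (x : UP H) (n : ℕ) : (c • x).val n = c • x.val n := rfl
lemma UP.bdd {H : ℕ → HilbertC} (x : UP H) : ∃ C : ℝ, ∀ n, ‖x.val n‖ ≤ C := x.2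
lemma UP.ext {H : ℕ → HilbertC} {x y : UP H} (h : ∀ n, x.val n = y.val n) : x = y :=
  Subtype.ext (funext h)

/-- The ultrafilter limit of inner products. -/
noncomputable def UP.uinner {H : ℕ → HilbertC} (x y : UP H) : ℂ :=
  limUnder (hyperfilter ℕ : Filter ℕ) (fun n => (⟪x.val n, y.val n⟫ : ℂ))

lemma UP.tendsto {H : ℕ → HilbertC} (x y : UP H) :
    Tendsto (fun n => (⟪x.val n, y.val n⟫ : ℂ)) (hyperfilter ℕ : Filter ℕ) (𝓝 (UP.uinner x y)) := by
  apply tendsto_nhds_limUnder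
  obtain ⟨C, hC⟩ := x.bdd
  obtain ⟨D, hD⟩ := y.bdd
  obtain ⟨z, _, hz⟩ := (isCompact_closedBall (0 : ℂ) (C * D)).ultrafilter_le_nhds
    ((hyperfilter ℕ).map (fun n => (⟪x.val n, y.val n⟫ : ℂ))) (by
      rw [Ultrafilter.coe_map, le_principal_iff, mem_map]
      refine Filter.univ_mem' fun n => ?_
      simp only [Set.mem_preimage, mem_closedBall_zero_iff]
      refine (norm_inner_le_norm _ _).trans ?_
      exact mul_le_mul (hC n) (hD n) (norm_nonneg _) ((norm_nonneg _).trans (hC n)))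
  exact ⟨z, hz⟩

noncomputable abbrev upCore (H : ℕ → HilbertC) : PreInnerProductSpace.Core ℂ (UP H) where
  inner := UP.uinner
  conj_inner_symm x y := by
    refine tendsto_nhds_unique ?_ (x.tendsto y)
    have := (Complex.continuous_conj.tendsto _).comp (y.tendsto x)
    refine this.congr fun n => ?_
    exact inner_conj_symm _ _
  re_inner_nonneg x := by
    have := (Complex.continuous_re.tendsto _).comp (x.tendsto x)
    exact ge_of_tendsto this (Eventually.of_forall fun n => inner_self_nonneg (𝕜 := ℂ))
  add_left x y z := by
    refine tendsto_nhds_unique ((x + y).tendsto z) ?_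
    refine ((x.tendsto z).add (y.tendsto z)).congr fun n => ?_
    rw [UP.add_val, inner_add_left]
  smul_left x y c := by
    refine tendsto_nhds_unique ((c • x).tendsto y) ?_
    refine ((x.tendsto y).const_mul _).congr fun n => ?_
    rw [UP.smul_val, inner_smul_left]

noncomputable instance (H : ℕ → HilbertC) : SeminormedAddCommGroup (UP H) :=
  InnerProductSpace.Core.toSeminormedAddCommGroup (c := upCore H)
noncomputable instance (H : ℕ → HilbertC) : InnerProductSpace ℂ (UP H) :=
  InnerProductSpace.ofCore (upCore H)

lemma UP.inner_tendsto {H : ℕ → HilbertC} (x y : UP H) :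
    Tendsto (fun n => (⟪x.val n, y.val n⟫ : ℂ)) (hyperfilter ℕ : Filter ℕ) (𝓝 (⟪x, y⟫ : ℂ)) :=
  UP.tendsto x y

/-- The operator induced by a sequence of contractions. -/
noncomputable def upOp {H : ℕ → HilbertC} (T : ∀ n, (H n).carrier →L[ℂ] (H n).carrier)
    (hT : ∀ n, ‖T n‖ ≤ 1) : UP H →L[ℂ] UP H :=
  LinearMap.mkContinuous
    { toFun := fun x => (⟨fun n => T n (x.val n), by
        obtain ⟨C, hC⟩ := x.bdd
        exact ⟨C, fun n => ((T n).le_of_opNorm_le (hT n) _).trans (by rw [one_mul]; exact hC n)⟩⟩ :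
          bddSeq H)
      map_add' := fun x y => UP.ext fun n => (T n).map_add _ _
      map_smul' := fun c x => UP.ext fun n => (T n).map_smul _ _ } 1 (by
    intro x
    rw [one_mul]
    refine (sq_le_sq₀ (norm_nonneg _) (norm_nonneg _)).1 ?_
    rw [@norm_sq_eq_re_inner ℂ, @norm_sq_eq_re_inner ℂ]
    refine le_of_tendsto_of_tendsto' ((Complex.continuous_re.tendsto _).comp (UP.inner_tendsto _ _))
      ((Complex.continuous_re.tendsto _).comp (UP.inner_tendsto _ _)) fun n => ?_
    change RCLike.re (⟪T n (x.val n), T n (x.val n)⟫ : ℂ) ≤ RCLike.re (⟪x.val n, x.val n⟫ : ℂ)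
    rw [inner_self_eq_norm_sq, inner_self_eq_norm_sq]
    have := (T n).le_of_opNorm_le (hT n) (x.val n)
    rw [one_mul] at this
    gcongr)

lemma upOp_val {H : ℕ → HilbertC} (T : ∀ n, (H n).carrier →L[ℂ] (H n).carrier)
    (hT : ∀ n, ‖T n‖ ≤ 1) (x : UP H) (n : ℕ) : (upOp T hT x).val n = T n (x.val n) := rfl

/-- The ultraproduct Hilbert space. -/
noncomputable def upH (H : ℕ → HilbertC) : HilbertC := ⟨UniformSpace.Completion (UP H)⟩

open UniformSpace in
lemma upOp_stoch {X A : Type} [Fintype X] [Fintype A] [DecidableEq X]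
    {H : ℕ → HilbertC}
    (E : ∀ n, X → X → A → A → ((H n).carrier →L[ℂ] (H n).carrier))
    (hE : ∀ n, IsStochasticOperatorMatrix (E n)) (hn : ∀ x x' a a' n, ‖E n x x' a a'‖ ≤ 1) :
    IsStochasticOperatorMatrix (H := Completion (UP H))
      (fun x x' a a' => (upOp (fun n => E n x x' a a') (hn x x' a a')).completion) := by
  constructor
  · intro ξ
    have hd : DenseRange (Pi.map (fun _ : X × A => ((↑) : UP H → Completion (UP H)))) :=
      DenseRange.piMap fun _ => Completion.denseRange_coe
    refine hd.induction_on (p := fun ξ : X × A → Completion (UP H) =>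
      0 ≤ ∑ p : X × A, ∑ q : X × A,
      (⟪ξ p, (upOp (fun n => E n p.1 q.1 p.2 q.2) (hn p.1 q.1 p.2 q.2)).completion (ξ q)⟫ : ℂ))
      ξ ?_ ?_
    · refine isClosed_le continuous_const ?_
      refine continuous_finsetSum _ fun p _ => continuous_finsetSum _ fun q _ => ?_
      exact (continuous_apply p).inner
        ((ContinuousLinearMap.continuous _).comp (continuous_apply q))
    · intro v
      simp only [Pi.map_apply, ContinuousLinearMap.completion_apply_coe, Completion.inner_coe]
      refine ge_of_tendsto (tendsto_finsetSum _ fun p _ => tendsto_finsetSum _ fun q _ =>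
        UP.inner_tendsto _ _) (Eventually.of_forall fun n => ?_)
      exact (hE n).1 fun p => (v p).val n
  · intro x x'
    apply ContinuousLinearMap.ext
    intro v
    induction v using Completion.induction_on with
    | hp =>
      exact isClosed_eq (ContinuousLinearMap.continuous _) (ContinuousLinearMap.continuous _)
    | ih v =>
      rw [_root_.sum_apply]
      simp only [ContinuousLinearMap.completion_apply_coe]
      have key : ∑ a, upOp (fun n => E n x x' a a) (hn x x' a a) v = if x = x' then v else 0 := by
        refine UP.ext fun n => ?_
        have h1 := congrArg (fun T : (H n).carrier →L[ℂ] (H n).carrier => T (v.val n))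
          ((hE n).2 x x')
        have h2 : (∑ a, upOp (fun n => E n x x' a a) (hn x x' a a) v).val n
            = ∑ a, E n x x' a a (v.val n) := by
          let φ : UP H →+ (H n).carrier := ⟨⟨fun x => x.val n, rfl⟩, fun _ _ => rfl⟩
          exact map_sum φ _ _
        rw [h2]
        simp only [_root_.sum_apply] at h1
        rw [h1]
        split_ifs <;> rfl
      have h3 := congrArg (Completion.toCompl (α := UP H)) key
      rw [map_sum] at h3
      refine h3.trans ?_
      split_ifs
      · rfl
      · exact map_zero (Completion.toCompl (α := UP H))

open UniformSpace in
lemma exists_ultra {X A : Type} [Fintype X] [Fintype A] [DecidableEq X]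
    [DecidableEq A] {H : ℕ → HilbertC} (ξ : ∀ n, (H n).carrier) (hξ : ∀ n, ‖ξ n‖ = 1)
    (E F : ∀ n, X → X → A → A → ((H n).carrier →L[ℂ] (H n).carrier))
    (hE : ∀ n, IsStochasticOperatorMatrix (E n)) (hF : ∀ n, IsStochasticOperatorMatrix (F n))
    (hE1 : ∀ x x' a a' n, ‖E n x x' a a'‖ ≤ 1) (hF1 : ∀ x x' a a' n, ‖F n x x' a a'‖ ≤ 1)
    (hc : ∀ n (x x' y y' : X) (a a' b b' : A), Commute (E n x x' a a') (F n y y' b b')) :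
    ∃ (ℍ : HilbertC) (η : ℍ.carrier) (E' F' : X → X → A → A → (ℍ.carrier →L[ℂ] ℍ.carrier)),
      ‖η‖ = 1 ∧ IsStochasticOperatorMatrix E' ∧ IsStochasticOperatorMatrix F' ∧
      (∀ (x x' y y' : X) (a a' b b' : A), Commute (E' x x' a a') (F' y y' b b')) ∧
      ∀ (x x' y y' : X) (a a' b b' : A),
        Tendsto (fun n => (⟪ξ n, E n x x' a a' (F n y y' b b' (ξ n))⟫ : ℂ))
          (hyperfilter ℕ : Filter ℕ) (𝓝 (⟪η, E' x x' a a' (F' y y' b b' η)⟫ : ℂ)) := by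
  let η : UP H := (⟨ξ, 1, fun n => (hξ n).le⟩ : bddSeq H)
  refine ⟨⟨Completion (UP H)⟩, (η : Completion (UP H)),
    fun x x' a a' => (upOp (fun n => E n x x' a a') (hE1 x x' a a')).completion,
    fun x x' a a' => (upOp (fun n => F n x x' a a') (hF1 x x' a a')).completion,
    ?_, upOp_stoch E hE hE1, upOp_stoch F hF hF1, ?_, ?_⟩
  · have h1 : (⟪η, η⟫ : ℂ) = 1 := by
      refine tendsto_nhds_unique (UP.inner_tendsto η η) ?_
      refine tendsto_const_nhds.congr fun n => ?_
      change _ = (⟪ξ n, ξ n⟫ : ℂ)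
      rw [inner_self_eq_norm_sq_to_K, hξ]; simp
    have h2 : ‖(η : Completion (UP H))‖ = 1 := by
      rw [Completion.norm_coe]
      have := @norm_sq_eq_re_inner ℂ _ _ _ _ η
      rw [h1] at this
      have h3 : ‖η‖ ^ 2 = 1 := by simpa only [RCLike.one_re] using this
      exact (pow_eq_one_iff_of_nonneg (norm_nonneg η) two_ne_zero).1 h3
    exact h2
  · intro x x' y y' a a' b b'
    apply ContinuousLinearMap.ext
    intro v
    induction v using Completion.induction_on with
    | hp =>
      exact isClosed_eq (ContinuousLinearMap.continuous _) (ContinuousLinearMap.continuous _)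
    | ih v =>
      rw [mul_apply_eq_comp, mul_apply_eq_comp]
      simp only [ContinuousLinearMap.completion_apply_coe]
      congr 1
      refine UP.ext fun n => ?_
      exact congrArg (fun T : (H n).carrier →L[ℂ] (H n).carrier => T (v.val n))
          (hc n x x' y y' a a' b b').eq
  · intro x x' y y' a a' b b'
    have := UP.inner_tendsto η (upOp (fun n => E n x x' a a') (hE1 x x' a a')
      (upOp (fun n => F n y y' b b') (hF1 y y' b b') η))
    rw [← Completion.inner_coe, ← ContinuousLinearMap.completion_apply_coe,
      ← ContinuousLinearMap.completion_apply_coe] at this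
    exact this
end UltraPart

section FinalPart
open Filter Topology

open scoped MatrixOrder Matrix.Norms.L2Operator in
lemma psd_factor {n : Type*} [Fintype n] [DecidableEq n] {M : Matrix n n ℂ}
    (hM : M.PosSemidef) : ∃ B : Matrix n n ℂ, M = Bᴴ * B := by
  obtain ⟨B, hB⟩ := CStarAlgebra.nonneg_iff_eq_star_mul_self.1 (Matrix.nonneg_iff_posSemidef.2 hM)
  exact ⟨B, hB⟩

lemma psd_of_form {n : Type*} [Fintype n] [DecidableEq n] (M : Matrix n n ℂ)
    (h : ∀ c : n → ℂ, 0 ≤ star c ⬝ᵥ (M *ᵥ c)) : M.PosSemidef := by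
  rw [← Matrix.isPositive_toEuclideanLin_iff, LinearMap.isPositive_iff_complex]
  intro v
  have h1 := h v.ofLp
  have h2 : (⟪v, Matrix.toEuclideanLin M v⟫ : ℂ) = star v.ofLp ⬝ᵥ (M *ᵥ v.ofLp) := by
    rw [EuclideanSpace.inner_eq_star_dotProduct, dotProduct_comm]
    rfl
  rw [← h2] at h1
  have h3 : (⟪Matrix.toEuclideanLin M v, v⟫ : ℂ) = ⟪v, Matrix.toEuclideanLin M v⟫ := by
    rw [← inner_conj_symm]
    exact Complex.conj_eq_iff_im.2 (Complex.nonneg_iff.1 h1).2.symm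
  rw [h3]
  rw [Complex.nonneg_iff] at h1
  refine ⟨?_, h1.1⟩
  apply Complex.ext <;> simp
  exact h1.2

lemma corr_formula {X Y A B : Type} [Fintype X] [Fintype Y] [Fintype A] [Fintype B]
    [DecidableEq X] [DecidableEq Y]
    (Γ : Matrix (X × Y) (X × Y) ℂ →ₗ[ℂ] Matrix (A × B) (A × B) ℂ)
    (M : X → X → Y → Y → Matrix (A × B) (A × B) ℂ)
    (h : ∀ (x x' : X) (y y' : Y),
      Γ ((Matrix.single x x' (1 : ℂ)) ⊗ₖ (Matrix.single y y' (1 : ℂ))) = M x x' y y')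
    (σ : Matrix (X × Y) (X × Y) ℂ) :
    Γ σ = ∑ i, ∑ j, σ i j • M i.1 j.1 i.2 j.2 := by
  conv_lhs => rw [Matrix.matrix_eq_sum_single σ]
  simp only [map_sum]
  refine Finset.sum_congr rfl fun i _ => Finset.sum_congr rfl fun j _ => ?_
  rw [← h, Matrix.single_kronecker_single, ← map_smul, Matrix.smul_single]
  simp

/-- The linear map with prescribed values on matrix units. -/
noncomputable def corrMap {X Y A B : Type} [Fintype X] [Fintype Y]
    (M : X → X → Y → Y → Matrix (A × B) (A × B) ℂ) :
    Matrix (X × Y) (X × Y) ℂ →ₗ[ℂ] Matrix (A × B) (A × B) ℂ where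
  toFun σ := ∑ i, ∑ j, σ i j • M i.1 j.1 i.2 j.2
  map_add' σ τ := by simp [add_smul, Finset.sum_add_distrib]
  map_smul' c σ := by simp [Finset.smul_sum, mul_smul]

lemma corrMap_single {X Y A B : Type} [Fintype X] [Fintype Y] [DecidableEq X] [DecidableEq Y]
    (M : X → X → Y → Y → Matrix (A × B) (A × B) ℂ) (x x' : X) (y y' : Y) :
    corrMap M ((Matrix.single x x' (1 : ℂ)) ⊗ₖ (Matrix.single y y' (1 : ℂ))) = M x x' y y' := by
  rw [Matrix.single_kronecker_single]
  change ∑ i : X × Y, ∑ j : X × Y, _ = _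
  rw [Finset.sum_eq_single (x, y), Finset.sum_eq_single (x', y')]
  · simp
  · intro b _ hb
    rw [Matrix.single_apply_of_col_ne _ _ hb.symm, zero_smul]
  · simp
  · intro b _ hb
    refine Finset.sum_eq_zero fun j _ => ?_
    rw [Matrix.single_apply_of_row_ne hb.symm, zero_smul]
  · simp

lemma qc_trace {X A : Type} [Fintype X] [Fintype A] [DecidableEq X]
    (Γ : Matrix (X × X) (X × X) ℂ →ₗ[ℂ] Matrix (A × A) (A × A) ℂ) (h : IsQCCorrelation Γ)
    (σ : Matrix (X × X) (X × X) ℂ) : (Γ σ).trace = σ.trace := by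
  obtain ⟨ℍ, ξ, E, F, hξ, hE, hF, hc, hΓ⟩ := h
  rw [corr_formula Γ _ hΓ, Matrix.trace_sum]
  unfold Matrix.trace
  refine Finset.sum_congr rfl fun i _ => ?_
  have key : ∀ j : X × X, ∑ p : A × A, (⟪ξ, E i.1 j.1 p.1 p.1 (F i.2 j.2 p.2 p.2 ξ)⟫ : ℂ)
      = if i = j then 1 else 0 := by
    intro j
    rw [Fintype.sum_prod_type]
    simp only [← inner_sum, ← map_sum, ← _root_.sum_apply, hE.2, hF.2]
    by_cases h1 : i.1 = j.1 <;> by_cases h2 : i.2 = j.2 <;> simp [h1, h2, Prod.ext_iff, hξ]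
  simp only [Matrix.diag_apply, Matrix.sum_apply, Matrix.smul_apply, Matrix.of_apply,
    ContinuousLinearMap.comp_apply]
  rw [Finset.sum_comm]
  simp only [← Finset.smul_sum, key]
  simp

lemma qc_pos {X A : Type} [Fintype X] [Fintype A] [DecidableEq X] [DecidableEq A]
    (Γ : Matrix (X × X) (X × X) ℂ →ₗ[ℂ] Matrix (A × A) (A × A) ℂ) (h : IsQCCorrelation Γ)
    (ρ : Matrix (X × X) (X × X) ℂ) (hρ : ρ.PosSemidef) : (Γ ρ).PosSemidef := by
  obtain ⟨ℍ, ξ, E, F, hξ, hE, hF, hc, hΓ⟩ := h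
  obtain ⟨B, hB⟩ := psd_factor hρ
  refine psd_of_form _ fun c => ?_
  let f : X × X → (X × X) × (A × A) → (X × X) × (A × A) → ℂ := fun k I J =>
    ⟪(c I.2 * B k I.1) • ξ, E I.1.1 J.1.1 I.2.1 J.2.1
      (F I.1.2 J.1.2 I.2.2 J.2.2 ((c J.2 * B k J.1) • ξ))⟫
  have hf : ∀ k, 0 ≤ ∑ I, ∑ J, f k I J := by
    intro k
    have h1 := prod_pos (fun i j : X × A => E i.1 j.1 i.2 j.2) (fun i j : X × A => F i.1 j.1 i.2 j.2)
      hE.1 hF.1 (fun i j k l => hc _ _ _ _ _ _ _ _)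
      (fun i => (c (i.1.2, i.2.2) * B k (i.1.1, i.2.1)) • ξ)
    refine h1.trans_eq ?_
    refine Fintype.sum_equiv (Equiv.prodProdProdComm X A X A) _ _ fun I => ?_
    exact Fintype.sum_equiv (Equiv.prodProdProdComm X A X A) _ _ fun J => rfl
  have hsum := Finset.sum_nonneg (s := Finset.univ) fun k _ => hf k
  refine hsum.trans_eq ?_
  rw [Finset.sum_comm, Fintype.sum_prod_type_right]
  simp only [dotProduct, Matrix.mulVec, Finset.mul_sum]
  refine Finset.sum_congr rfl fun p _ => ?_
  have h2 : ∀ i : X × X, ∑ k, ∑ J, f k (i, p) J = ∑ q, ∑ j, ∑ k, f k (i, p) (j, q) := by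
    intro i
    rw [Finset.sum_comm, Fintype.sum_prod_type_right]
  simp only [h2]
  rw [Finset.sum_comm]
  refine Finset.sum_congr rfl fun q _ => ?_
  rw [corr_formula Γ _ hΓ]
  simp only [Matrix.sum_apply, Matrix.smul_apply, Matrix.of_apply, Finset.mul_sum, Finset.sum_mul]
  refine Finset.sum_congr rfl fun i _ => Finset.sum_congr rfl fun j _ => ?_
  rw [hB]
  simp only [f, map_smul, inner_smul_left, inner_smul_right, Matrix.mul_apply,
    Matrix.conjTranspose_apply, Finset.sum_mul, Finset.mul_sum, smul_eq_mul,
    ContinuousLinearMap.comp_apply, Pi.star_apply, map_mul, RCLike.star_def]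
  refine Finset.sum_congr rfl fun k _ => ?_
  ring

lemma qc_compact {X A : Type} [Fintype X] [Fintype A] [DecidableEq X] [DecidableEq A]
    (Γ : ℕ → Matrix (X × X) (X × X) ℂ →ₗ[ℂ] Matrix (A × A) (A × A) ℂ)
    (h : ∀ n, IsQCCorrelation (Γ n)) :
    ∃ Γ' : Matrix (X × X) (X × X) ℂ →ₗ[ℂ] Matrix (A × A) (A × A) ℂ, IsQCCorrelation Γ' ∧
      ∀ σ, Tendsto (fun n => Γ n σ) (hyperfilter ℕ : Filter ℕ) (𝓝 (Γ' σ)) := by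
  choose H ξ E F hξ hE hF hc hΓ using h
  obtain ⟨ℍ, η, E', F', hη, hE', hF', hc', ht⟩ := exists_ultra ξ hξ E F hE hF
    (fun x x' a a' n => stoch_norm_le _ (hE n) x x' a a')
    (fun x x' a a' n => stoch_norm_le _ (hF n) x x' a a')
    (fun n x x' y y' a a' b b' => hc n x x' y y' a a' b b')
  refine ⟨corrMap fun x x' y y' => Matrix.of fun p q =>
    (⟪η, ((E' x x' p.1 q.1) ∘L (F' y y' p.2 q.2)) η⟫ : ℂ),
    ⟨ℍ, η, E', F', hη, hE', hF', fun x x' y y' a a' b b' => hc' x x' y y' a a' b b',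
      fun x x' y y' => corrMap_single _ x x' y y'⟩, fun σ => ?_⟩
  simp only [fun n => corr_formula (Γ n) _ (hΓ n) σ]
  refine tendsto_finsetSum _ fun i _ => tendsto_finsetSum _ fun j _ => Tendsto.const_smul ?_ _
  refine tendsto_pi_nhds.2 fun p => tendsto_pi_nhds.2 fun q => ?_
  exact ht _ _ _ _ _ _ _ _
end FinalPart

/-- For the quantum implication game `P ⇒ Q`, the quantum commuting
value equals `1` iff the game has a perfect quantum commuting strategy. -/
theorem statement16
    {X A : Type} [Fintype X] [Fintype A] [Nonempty X] [Nonempty A]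
    [DecidableEq X] [DecidableEq A]
    (P : Matrix (X × X) (X × X) ℂ) (Q : Matrix (A × A) (A × A) ℂ)
    (hP : P.IsHermitian ∧ P * P = P) (hQ : Q.IsHermitian ∧ Q * Q = Q)
    (k : ℕ) (hk : 1 ≤ k) (hrank : P.rank = k) :
    sSup {t : ℝ | ∃ Γ : Matrix (X × X) (X × X) ℂ →ₗ[ℂ] Matrix (A × A) (A × A) ℂ,
        IsQCCorrelation Γ ∧ (t : ℂ) = (1 / (k : ℂ)) * Matrix.trace (Γ P * Q)} = 1
    ↔
    ∃ Γ : Matrix (X × X) (X × X) ℂ →ₗ[ℂ] Matrix (A × A) (A × A) ℂ,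
      IsQCCorrelation Γ ∧
      ∀ σ : Matrix (X × X) (X × X) ℂ, σ = P * σ * P → Γ σ = Q * Γ σ * Q := by
  have htrP : P.trace = (k : ℂ) := by rw [aux_trace_rank P hP.2, hrank]
  have hk0 : (k : ℂ) ≠ 0 := by exact_mod_cast (by omega : k ≠ 0)
  have hkpos : (0 : ℝ) < k := by exact_mod_cast hk
  set S := {t : ℝ | ∃ Γ : Matrix (X × X) (X × X) ℂ →ₗ[ℂ] Matrix (A × A) (A × A) ℂ,
        IsQCCorrelation Γ ∧ (t : ℂ) = (1 / (k : ℂ)) * Matrix.trace (Γ P * Q)} with hS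
  have hub : ∀ t ∈ S, t ≤ 1 := by
    rintro t ⟨Γ, hΓ, ht⟩
    have h1 := aux_le (Γ P) Q hQ (qc_pos Γ hΓ P (aux_proj_psd P hP))
    rw [qc_trace Γ hΓ, htrP] at h1
    have h2 : (Γ P * Q).trace = (k : ℂ) * t := by rw [ht]; field_simp
    rw [h2] at h1
    have h3 : (k : ℝ) * t ≤ k := by exact_mod_cast h1
    nlinarith
  constructor
  · intro hsup
    have hne : S.Nonempty := by
      by_contra hcon
      rw [Set.not_nonempty_iff_eq_empty] at hcon
      rw [hcon, Real.sSup_empty] at hsup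
      exact zero_ne_one hsup
    obtain ⟨u, _, hu, huS⟩ := exists_seq_tendsto_sSup hne ⟨1, hub⟩
    rw [hsup] at hu
    choose Γ hΓ ht using huS
    obtain ⟨Γ', hΓ', hlim⟩ := qc_compact Γ hΓ
    refine ⟨Γ', hΓ', aux_perfect Γ' (qc_pos Γ' hΓ') P Q hP hQ ?_⟩
    rw [qc_trace Γ' hΓ', htrP]
    have h1 : Filter.Tendsto (fun n => (Γ n P * Q).trace) (Filter.hyperfilter ℕ : Filter ℕ)
        (nhds (Γ' P * Q).trace) := by
      have hcont : Continuous fun M : Matrix (A × A) (A × A) ℂ => (M * Q).trace := by fun_prop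
      exact (hcont.tendsto _).comp (hlim P)
    have h2 : Filter.Tendsto (fun n => (Γ n P * Q).trace) (Filter.hyperfilter ℕ : Filter ℕ)
        (nhds ((k : ℂ) * ((1 : ℝ) : ℂ))) := by
      have h3 := ((Complex.continuous_ofReal.tendsto _).comp
        (hu.mono_left Nat.hyperfilter_le_atTop)).const_mul (k : ℂ)
      refine h3.congr fun n => ?_
      simp only [Function.comp_apply]
      rw [ht n]; field_simp
    rw [tendsto_nhds_unique h1 h2]; simp
  · rintro ⟨Γ, hΓ, hperf⟩
    have h1 : Γ P = Q * Γ P * Q := hperf P (by rw [hP.2, hP.2])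
    have h2 : Γ P * Q = Γ P := by
      rw [h1, Matrix.mul_assoc, hQ.2]
    have h3 : (1 : ℝ) ∈ S := by
      refine ⟨Γ, hΓ, ?_⟩
      rw [h2, qc_trace Γ hΓ, htrP]; simp [hk0]
    exact le_antisymm (csSup_le ⟨1, h3⟩ hub) (le_csSup ⟨1, hub⟩ h3)
end

section
/- Let n ≥ 1 and m ≥ 1, and consider the quadruple X = [n], Y = {1}, A = {1}, B = [n] with reference space ℂ^R, R = [n]. Let ξ = n^{-1/2} Σ_{i=1}^n (e_i ⊗ e_1) ⊗ e_i ∈ ℂ^{X×Y} ⊗ ℂ^R, let γ_{k,i} ∈ ℂ (k ∈ [m], i ∈ [n]) satisfy Σ_{i=1}^n conj(γ_{k,i}) γ_{l,i} = δ_{k,l}, set γ_k = Σ_{i=1}^n γ_{k,i} (e_1 ⊗ e_i) ⊗ e_i ∈ ℂ^{A×B} ⊗ ℂ^R, and let P = Σ_{k=1}^m γ_k γ_k* (an orthogonal projection). For a class 𝒞 of linear maps M_{X×Y} → M_{A×B}, let ω_𝒞(ξ,P) = sup_{Γ∈𝒞} Tr((Γ ⊗ id_{M_R})(ξξ*) P).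 Then ω_{Q_loc}(ξ,P) = ω_{Q_q}(ξ,P) = ω_{Q_qc}(ξ,P) = (1/n) · max_{1≤i≤n} Σ_{k=1}^m |γ_{k,i}|², which equals (1/n)‖Σ_{k=1}^m D_k* D_k‖ where D_k ∈ Mₙ(ℂ) is the diagonal matrix with diagonal entries γ_{k,1},…,γ_{k,n}. -/
open Matrix ContinuousLinearMap
open scoped Kronecker ComplexOrder ComplexInnerProductSpace

/-- The amplification `id_{M_m} ⊗ Φ` of a linear map `Φ : M_X → M_A`. -/
def matAmpl {X A : Type*} (m : ℕ)
    (Φ : Matrix X X ℂ →ₗ[ℂ] Matrix A A ℂ)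
    (M : Matrix (Fin m × X) (Fin m × X) ℂ) :
    Matrix (Fin m × A) (Fin m × A) ℂ :=
  Matrix.of fun p q => Φ (Matrix.of fun x x' => M (p.1, x) (q.1, x')) p.2 q.2

/-- Complete positivity of a linear map `Φ : M_X → M_A`. -/
def IsCPMap {X A : Type*} [Fintype X] [Fintype A]
    (Φ : Matrix X X ℂ →ₗ[ℂ] Matrix A A ℂ) : Prop :=
  ∀ (m : ℕ) (M : Matrix (Fin m × X) (Fin m × X) ℂ),
    M.PosSemidef → (matAmpl m Φ M).PosSemidef

/-- A quantum channel is a completely positive trace-preserving linear map. -/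
def IsQChannel {X A : Type*} [Fintype X] [Fintype A]
    (Φ : Matrix X X ℂ →ₗ[ℂ] Matrix A A ℂ) : Prop :=
  IsCPMap Φ ∧ ∀ M : Matrix X X ℂ, (Φ M).trace = M.trace

/-- Local QNS correlations. -/
def IsLocalCorrelation {X Y A B : Type} [Fintype X] [Fintype Y] [Fintype A] [Fintype B]
    (Γ : Matrix (X × Y) (X × Y) ℂ →ₗ[ℂ] Matrix (A × B) (A × B) ℂ) : Prop :=
  ∃ (k : ℕ)
    (Φ : Fin k → (Matrix X X ℂ →ₗ[ℂ] Matrix A A ℂ))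
    (Ψ : Fin k → (Matrix Y Y ℂ →ₗ[ℂ] Matrix B B ℂ))
    (lam : Fin k → ℝ),
    (∀ i, IsQChannel (Φ i)) ∧ (∀ i, IsQChannel (Ψ i)) ∧
    (∀ i, 0 ≤ lam i) ∧ (∑ i, lam i = 1) ∧
    (∀ (ρ : Matrix X X ℂ) (τ : Matrix Y Y ℂ),
      Γ (ρ ⊗ₖ τ) = ∑ i, (lam i : ℂ) • ((Φ i ρ) ⊗ₖ (Ψ i τ)))

/-- A stochastic operator matrix over `(X, A)` acting on `ℂ^d`, as a family of
matrices. -/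
def IsStochasticMatrixFam {X A : Type*} [Fintype X] [Fintype A] [DecidableEq X]
    {d : ℕ} (E : X → X → A → A → Matrix (Fin d) (Fin d) ℂ) : Prop :=
  (Matrix.PosSemidef (Matrix.of
      (fun (p q : (X × A) × Fin d) => E p.1.1 q.1.1 p.1.2 q.1.2 p.2 q.2))) ∧
  (∀ x x' : X, ∑ a : A, E x x' a a = if x = x' then 1 else 0)

/-- QNS correlations of quantum type. -/
def IsQCorrelation {X Y A B : Type} [Fintype X] [Fintype Y] [Fintype A] [Fintype B]
    [DecidableEq X] [DecidableEq Y]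
    (Γ : Matrix (X × Y) (X × Y) ℂ →ₗ[ℂ] Matrix (A × B) (A × B) ℂ) : Prop :=
  ∃ (dA dB : ℕ)
    (E : X → X → A → A → Matrix (Fin dA) (Fin dA) ℂ)
    (F : Y → Y → B → B → Matrix (Fin dB) (Fin dB) ℂ)
    (ξ : Fin dA × Fin dB → ℂ),
    IsStochasticMatrixFam E ∧ IsStochasticMatrixFam F ∧
    (∑ i, ‖ξ i‖ ^ 2 = 1) ∧
    (∀ (x x' : X) (y y' : Y),
      Γ ((Matrix.single x x' (1 : ℂ)) ⊗ₖ (Matrix.single y y' (1 : ℂ)))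
        = Matrix.of fun p q =>
            dotProduct (star ξ) ((E x x' p.1 q.1 ⊗ₖ F y y' p.2 q.2).mulVec ξ))

/-- Distribution-type correlations. -/
def HasDist {n : ℕ} (Γ : Matrix (Fin n × Unit) (Fin n × Unit) ℂ →ₗ[ℂ]
    Matrix (Unit × Fin n) (Unit × Fin n) ℂ) (p : Fin n → ℝ) : Prop :=
  (∀ r, 0 ≤ p r) ∧ ∑ r, p r = 1 ∧
  ∀ r r', Γ (Matrix.single (r, ()) (r', ()) 1) ((), r) ((), r') = if r = r' then (p r : ℂ) else 0

/-- The trace-and-replace map. -/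
noncomputable def trChan {X A : Type*} [Fintype X] (σ : Matrix A A ℂ) :
    Matrix X X ℂ →ₗ[ℂ] Matrix A A ℂ :=
  (Matrix.traceLinearMap X ℂ ℂ).smulRight σ

lemma trChan_apply {X A : Type*} [Fintype X] (σ : Matrix A A ℂ) (M : Matrix X X ℂ) :
    trChan σ M = M.trace • σ := rfl

lemma trChan_isQ {X A : Type*} [Fintype X] [Fintype A] (σ : Matrix A A ℂ)
    (hσ : σ.PosSemidef) (ht : σ.trace = 1) : IsQChannel (trChan (X := X) σ) := by
  classical
  refine ⟨fun m M hM => ?_, fun M => by simp [trChan_apply, ht]⟩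
  have h1 : (∑ x : X, M.submatrix (fun i : Fin m => (i, x)) (fun i => (i, x))).PosSemidef :=
    Matrix.posSemidef_sum _ fun x _ => hM.submatrix _
  have h2 := h1.kronecker hσ
  suffices e : matAmpl m (trChan σ) M =
      (∑ x : X, M.submatrix (fun i : Fin m => (i, x)) (fun i => (i, x))) ⊗ₖ σ by
    rw [e]; exact h2
  ext p q
  simp [matAmpl, trChan_apply, Matrix.trace, Matrix.kroneckerMap_apply, Matrix.sum_apply]

lemma single_psd {A : Type*} [Fintype A] [DecidableEq A] (i : A) :
    (Matrix.single i i (1 : ℂ)).PosSemidef := by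
  rw [← Matrix.diagonal_single]
  refine Matrix.PosSemidef.diagonal ?_
  intro j
  by_cases h : j = i
  · subst h; simp
  · simp [h]

lemma dist_loc {n : ℕ} (Γ : Matrix (Fin n × Unit) (Fin n × Unit) ℂ →ₗ[ℂ]
    Matrix (Unit × Fin n) (Unit × Fin n) ℂ) (h : IsLocalCorrelation Γ) : ∃ p, HasDist Γ p := by
  obtain ⟨k, Φ, Ψ, lam, hΦ, hΨ, h0, h1, hΓ⟩ := h
  have hpsd : ∀ i, (Ψ i 1).PosSemidef := by
    intro i
    have := ((hΨ i).1 1 1 Matrix.PosSemidef.one).submatrix (fun b : Fin n => ((0 : Fin 1), b))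
    convert this using 1
    ext b b'
    simp only [matAmpl, Matrix.submatrix_apply, Matrix.of_apply]
    congr 2
  have hre : ∀ i r, ((((Ψ i 1) r r).re : ℝ) : ℂ) = (Ψ i 1) r r := by
    intro i r
    have := (hpsd i).diag_nonneg (i := r)
    exact (Complex.eq_re_of_ofReal_le (r := 0) (by simpa using this)).symm
  have hE : ∀ i (M : Matrix (Fin n) (Fin n) ℂ), (Φ i M) () () = M.trace := by
    intro i M
    have := (hΦ i).2 M
    simpa [Matrix.trace] using this
  refine ⟨fun r => ∑ i, lam i * ((Ψ i 1) r r).re, ?_, ?_, ?_⟩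
  · intro r
    refine Finset.sum_nonneg fun i _ => mul_nonneg (h0 i) ?_
    have := (hpsd i).diag_nonneg (i := r)
    exact (Complex.le_def.1 this).1
  · rw [Finset.sum_comm]
    rw [← h1]
    refine Finset.sum_congr rfl fun i _ => ?_
    rw [← Finset.mul_sum]
    have := (hΨ i).2 1
    have h2 : ∑ r, ((Ψ i 1) r r).re = 1 := by
      have h3 := congrArg Complex.re this
      simpa [Matrix.trace] using h3
    rw [h2, mul_one]
  · intro r r'
    have e : Matrix.single (r, ()) (r', ()) (1 : ℂ)
        = (Matrix.single r r' (1 : ℂ)) ⊗ₖ (1 : Matrix Unit Unit ℂ) := by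
      ext ⟨a, _⟩ ⟨b, _⟩
      simp [Matrix.single_apply, Matrix.kroneckerMap_apply]
    rw [e, hΓ]
    simp only [Matrix.sum_apply, Matrix.smul_apply, Matrix.kroneckerMap_apply, hE]
    by_cases hr : r = r'
    · subst hr
      simp [hre]
    · simp [hr, Matrix.trace_single_eq_of_ne]

lemma dist_q {n : ℕ} (Γ : Matrix (Fin n × Unit) (Fin n × Unit) ℂ →ₗ[ℂ]
    Matrix (Unit × Fin n) (Unit × Fin n) ℂ) (h : IsQCorrelation Γ) : ∃ p, HasDist Γ p := by
  obtain ⟨dA, dB, E, F, ξ, ⟨hE1, hE2⟩, ⟨hF1, hF2⟩, h1, hΓ⟩ := h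
  have hE : ∀ x x', E x x' () () = if x = x' then 1 else 0 := by
    intro x x'; simpa using hE2 x x'
  have hF := hF2 () ()
  simp only [if_true] at hF
  have hpsd : ∀ r, (F () () r r).PosSemidef := by
    intro r
    exact hF1.submatrix (fun b : Fin dB => (((), r), b))
  set c : Fin n → ℂ := fun r =>
    dotProduct (star ξ) (((1 : Matrix (Fin dA) (Fin dA) ℂ) ⊗ₖ F () () r r).mulVec ξ) with hc
  have hc0 : ∀ r, 0 ≤ c r := fun r =>
    (Matrix.PosSemidef.one.kronecker (hpsd r)).dotProduct_mulVec_nonneg ξ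
  have hsum : ∑ r, c r = 1 := by
    have : ∑ r, c r = dotProduct (star ξ)
        (((1 : Matrix (Fin dA) (Fin dA) ℂ) ⊗ₖ (∑ r, F () () r r)).mulVec ξ) := by
      have e : ((1 : Matrix (Fin dA) (Fin dA) ℂ) ⊗ₖ (∑ r, F () () r r))
          = ∑ r, (1 : Matrix (Fin dA) (Fin dA) ℂ) ⊗ₖ F () () r r := by
        ext a b
        simp [Matrix.kroneckerMap_apply, Matrix.sum_apply, Finset.mul_sum]
      rw [e, Matrix.sum_mulVec, dotProduct_sum]
    rw [this, hF, Matrix.one_kronecker_one, Matrix.one_mulVec]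
    have : dotProduct (star ξ) ξ = ((∑ i, ‖ξ i‖ ^ 2 : ℝ) : ℂ) := by
      simp only [dotProduct, Pi.star_apply, RCLike.star_def]
      push_cast
      exact Finset.sum_congr rfl fun i _ => Complex.conj_mul' _
    rw [this, h1]; simp
  refine ⟨fun r => (c r).re, fun r => (Complex.le_def.1 (hc0 r)).1, ?_, ?_⟩
  · simpa using congrArg Complex.re hsum
  · intro r r'
    have e : Matrix.single (r, ()) (r', ()) (1 : ℂ)
        = (Matrix.single r r' (1 : ℂ)) ⊗ₖ (Matrix.single () () (1 : ℂ)) := by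
      ext ⟨a, _⟩ ⟨b, _⟩
      simp [Matrix.single_apply, Matrix.kroneckerMap_apply]
    rw [e, hΓ]
    simp only [Matrix.of_apply, hE]
    by_cases hr : r = r'
    · subst hr
      rw [if_pos rfl, if_pos rfl]
      exact Complex.eq_re_of_ofReal_le (r := 0) (by simpa using hc0 r)
    · simp [hr]

lemma dist_qc {n : ℕ} (Γ : Matrix (Fin n × Unit) (Fin n × Unit) ℂ →ₗ[ℂ]
    Matrix (Unit × Fin n) (Unit × Fin n) ℂ) (h : IsQCCorrelation Γ) : ∃ p, HasDist Γ p := by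
  obtain ⟨ℍ, ξ, E, F, h1, ⟨hE1, hE2⟩, ⟨hF1, hF2⟩, -, hΓ⟩ := h
  have hE : ∀ x x', E x x' () () = if x = x' then 1 else 0 := by
    intro x x'; simpa using hE2 x x'
  have hF := hF2 () ()
  simp only [if_true] at hF
  set c : Fin n → ℂ := fun r => ⟪ξ, F () () r r ξ⟫ with hc
  have hc0 : ∀ r, 0 ≤ c r := by
    intro r
    have := hF1 (fun p => if p = ((), r) then ξ else 0)
    rw [Finset.sum_eq_single ((), r), Finset.sum_eq_single ((), r)] at this
    · simpa using this
    · intro b _ hb; simp [hb]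
    · simp
    · intro b _ hb; simp [hb]
    · simp
  have hsum : ∑ r, c r = 1 := by
    have : ∑ r, c r = ⟪ξ, (∑ r, F () () r r) ξ⟫ := by
      rw [ContinuousLinearMap.sum_apply, inner_sum]
    rw [this, hF]
    simp [inner_self_eq_norm_sq_to_K, h1]
  refine ⟨fun r => (c r).re, fun r => (Complex.le_def.1 (hc0 r)).1, ?_, ?_⟩
  · simpa using congrArg Complex.re hsum
  · intro r r'
    have e : Matrix.single (r, ()) (r', ()) (1 : ℂ)
        = (Matrix.single r r' (1 : ℂ)) ⊗ₖ (Matrix.single () () (1 : ℂ)) := by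
      ext ⟨a, _⟩ ⟨b, _⟩
      simp [Matrix.single_apply, Matrix.kroneckerMap_apply]
    rw [e, hΓ]
    simp only [Matrix.of_apply, hE]
    by_cases hr : r = r'
    · subst hr
      rw [if_pos rfl, if_pos rfl]
      exact Complex.eq_re_of_ofReal_le (r := 0) (by simpa using hc0 r)
    · simp [hr]

/-- The optimal strategy: discard the input, answer `i`. -/
noncomputable def detΓ {n : ℕ} (i : Fin n) : Matrix (Fin n × Unit) (Fin n × Unit) ℂ →ₗ[ℂ]
    Matrix (Unit × Fin n) (Unit × Fin n) ℂ :=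
  trChan (Matrix.single ((), i) ((), i) 1)

lemma det_dist {n : ℕ} (i : Fin n) : HasDist (detΓ i) (fun r => if r = i then 1 else 0) := by
  refine ⟨fun r => by dsimp only; split_ifs <;> norm_num, by simp, ?_⟩
  intro r r'
  rw [detΓ, trChan_apply]
  by_cases hr : r = r'
  · subst hr
    by_cases h : i = r
    · simp [h]
    · have h' : r ≠ i := fun e => h e.symm
      simp [Matrix.single_apply, h, h']
  · rw [Matrix.trace_single_eq_of_ne _ _ _ (by simpa using hr)]
    simp [hr]

lemma det_loc {n : ℕ} (i : Fin n) : IsLocalCorrelation (detΓ i) := by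
  refine ⟨1, fun _ => trChan 1, fun _ => trChan (Matrix.single i i 1), fun _ => 1,
    fun _ => trChan_isQ _ Matrix.PosSemidef.one (by simp),
    fun _ => trChan_isQ _ (single_psd i) (by simp), by simp, by simp, ?_⟩
  intro ρ τ
  ext ⟨_, a⟩ ⟨_, b⟩
  simp [detΓ, trChan_apply, Matrix.trace_kronecker, Matrix.kroneckerMap_apply,
    Matrix.single_apply]

lemma det_q {n : ℕ} (i : Fin n) : IsQCorrelation (detΓ i) := by
  refine ⟨1, 1, fun x x' _ _ => if x = x' then 1 else 0,
    fun _ _ b b' => if i = b ∧ i = b' then 1 else 0, fun _ => 1, ⟨?_, ?_⟩, ⟨?_, ?_⟩, by simp, ?_⟩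
  · convert (Matrix.PosSemidef.one : (1 : Matrix ((Fin n × Unit) × Fin 1) _ ℂ).PosSemidef)
    ext ⟨⟨a, _⟩, u⟩ ⟨⟨b, _⟩, v⟩
    have : u = v := Subsingleton.elim _ _
    subst this
    by_cases h : a = b <;> simp [h, Matrix.one_apply]
  · simp
  · convert single_psd (((), i), (0 : Fin 1))
    ext ⟨⟨_, a⟩, u⟩ ⟨⟨_, b⟩, v⟩
    have hu : u = 0 := Subsingleton.elim _ _
    have hv : v = 0 := Subsingleton.elim _ _
    subst hu hv
    by_cases h : i = a ∧ i = b
    · obtain ⟨rfl, rfl⟩ := h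
      simp
    · simp [h, Matrix.single_apply]
  · intro _ _
    simp
  · intro x x' y y'
    ext ⟨_, a⟩ ⟨_, b⟩
    simp only [detΓ, trChan_apply, Matrix.trace_kronecker]
    by_cases hx : x = x'
    · subst hx
      by_cases h : i = a ∧ i = b
      · obtain ⟨rfl, rfl⟩ := h
        simp [dotProduct]
      · simp [h, Matrix.single_apply]
    · simp [hx, Matrix.trace_single_eq_of_ne]

lemma det_qc {n : ℕ} (i : Fin n) : IsQCCorrelation (detΓ i) := by
  refine ⟨⟨ℂ⟩, (1 : ℂ), fun x x' _ _ => if x = x' then 1 else 0,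
    fun _ _ b b' => if i = b ∧ i = b' then 1 else 0, ?_, ⟨?_, ?_⟩, ⟨?_, ?_⟩, ?_, ?_⟩
  · exact norm_one
  · intro ξ
    refine Finset.sum_nonneg fun p _ => ?_
    rw [Finset.sum_eq_single p]
    · simp only [if_true]
      change 0 ≤ (⟪ξ p, ξ p⟫ : ℂ)
      rw [inner_self_eq_norm_sq_to_K]
      positivity
    · intro q _ hq
      have : p.1 ≠ q.1 := fun h => hq (Prod.ext h.symm rfl)
      simp [this]
    · simp
  · simp
  · intro ξ
    rw [Finset.sum_eq_single ((), i), Finset.sum_eq_single ((), i)]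
    · simp only [and_self, if_true]
      change 0 ≤ (⟪ξ ((), i), ξ ((), i)⟫ : ℂ)
      rw [inner_self_eq_norm_sq_to_K]
      positivity
    · intro q _ hq
      have : i ≠ q.2 := fun h => hq (Prod.ext rfl h.symm)
      simp [this]
    · simp
    · intro q _ hq
      have : i ≠ q.2 := fun h => hq (Prod.ext rfl h.symm)
      simp [this]
    · simp
  · intro _ _
    simp
  · intro x x' _ _ _ _ b b'
    dsimp only
    split_ifs <;> simp
  · intro x x' y y'
    ext ⟨_, a⟩ ⟨_, b⟩
    simp only [detΓ, trChan_apply, Matrix.trace_kronecker]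
    by_cases hx : x = x'
    · subst hx
      by_cases h : i = a ∧ i = b
      · obtain ⟨rfl, rfl⟩ := h
        have : (⟪(1 : ℂ), (1 : ℂ)⟫ : ℂ) = 1 := by simp
        simp [Matrix.single_apply]
      · simp [h, Matrix.single_apply]
    · simp [hx, Matrix.trace_single_eq_of_ne]

lemma sup_eq {n : ℕ} (hn : 1 ≤ n) (g : Fin n → ℝ)
    (val : (Matrix ((Fin n × Unit)) ((Fin n × Unit)) ℂ →ₗ[ℂ]
        Matrix (Unit × Fin n) (Unit × Fin n) ℂ) → ℂ)
    (hv : ∀ Γ p, HasDist Γ p → val Γ = (((1 / (n : ℝ)) * ∑ r, p r * g r : ℝ) : ℂ))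
    (C : (Matrix ((Fin n × Unit)) ((Fin n × Unit)) ℂ →ₗ[ℂ]
        Matrix (Unit × Fin n) (Unit × Fin n) ℂ) → Prop)
    (hC : ∀ Γ, C Γ → ∃ p, HasDist Γ p) (hd : ∀ i, C (detΓ i)) :
    sSup {t : ℝ | ∃ Γ, C Γ ∧ (t : ℂ) = val Γ} = (1 / (n : ℝ)) * ⨆ i, g i := by
  haveI : Nonempty (Fin n) := ⟨⟨0, hn⟩⟩
  have hb : BddAbove (Set.range g) := (Set.finite_range g).bddAbove
  refine IsGreatest.csSup_eq ⟨?_, ?_⟩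
  · obtain ⟨i, hi⟩ := exists_eq_ciSup_of_finite (f := g)
    refine ⟨detΓ i, hd i, ?_⟩
    rw [hv _ _ (det_dist i), ← hi]
    simp
  · rintro t ⟨Γ, hΓ, ht⟩
    obtain ⟨p, hp⟩ := hC Γ hΓ
    rw [hv _ _ hp] at ht
    have ht' := Complex.ofReal_injective ht
    rw [ht']
    refine mul_le_mul_of_nonneg_left ?_ (by positivity)
    calc ∑ r, p r * g r ≤ ∑ r, p r * ⨆ i, g i :=
          Finset.sum_le_sum fun r _ => mul_le_mul_of_nonneg_left (le_ciSup hb r) (hp.1 r)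
      _ = ⨆ i, g i := by rw [← Finset.sum_mul, hp.2.1, one_mul]

/-- For the finite rank quantum game of Subsection 5.2, the local,
quantum and quantum commuting values all coincide and equal
`(1/n) · max_i Σ_k |γ_{k,i}|² = (1/n) ‖Σ_k D_k* D_k‖`. -/
theorem statement19
    (n m : ℕ) (hn : 1 ≤ n) (hm : 1 ≤ m)
    (γ : Fin m → Fin n → ℂ)
    (hγ : ∀ k l : Fin m,
      ∑ i, (starRingEnd ℂ) (γ k i) * γ l i = if k = l then 1 else 0)
    (ξc : Fin n × Unit → Fin n → ℂ)
    (hξc : ∀ w r, ξc w r = if w.1 = r then ((Real.sqrt n)⁻¹ : ℂ) else 0)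
    (γc : Fin m → (Unit × Fin n) × Fin n → ℂ)
    (hγc : ∀ k pr, γc k pr = if pr.1.2 = pr.2 then γ k pr.2 else 0)
    (Pm : Matrix ((Unit × Fin n) × Fin n) ((Unit × Fin n) × Fin n) ℂ)
    (hPm : Pm = Matrix.of fun p q => ∑ k, γc k p * (starRingEnd ℂ) (γc k q))
    (val : (Matrix ((Fin n × Unit)) ((Fin n × Unit)) ℂ →ₗ[ℂ]
        Matrix (Unit × Fin n) (Unit × Fin n) ℂ) → ℂ)
    (hval : ∀ Γ, val Γ = Matrix.trace
      ((Matrix.of fun (pr qr : (Unit × Fin n) × Fin n) =>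
          ∑ w : Fin n × Unit, ∑ w' : Fin n × Unit,
            (Γ (Matrix.single w w' (1 : ℂ))) pr.1 qr.1
              * ξc w pr.2 * (starRingEnd ℂ) (ξc w' qr.2)) * Pm))
    (D : Fin m → Matrix (Fin n) (Fin n) ℂ)
    (hD : ∀ k, D k = Matrix.diagonal (γ k)) :
    sSup {t : ℝ | ∃ Γ, IsLocalCorrelation Γ ∧ (t : ℂ) = val Γ}
        = (1 / (n : ℝ)) * ⨆ i : Fin n, ∑ k, ‖γ k i‖ ^ 2 ∧
    sSup {t : ℝ | ∃ Γ, IsQCorrelation Γ ∧ (t : ℂ) = val Γ}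
        = (1 / (n : ℝ)) * ⨆ i : Fin n, ∑ k, ‖γ k i‖ ^ 2 ∧
    sSup {t : ℝ | ∃ Γ, IsQCCorrelation Γ ∧ (t : ℂ) = val Γ}
        = (1 / (n : ℝ)) * ⨆ i : Fin n, ∑ k, ‖γ k i‖ ^ 2 ∧
    (1 / (n : ℝ)) * ⨆ i : Fin n, ∑ k, ‖γ k i‖ ^ 2
        = (1 / (n : ℝ)) * ‖Matrix.toEuclideanCLM (𝕜 := ℂ) (∑ k, (D k)ᴴ * D k)‖ := by
  have hn0 : (0 : ℝ) < n := by exact_mod_cast hn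
  haveI : Nonempty (Fin n) := ⟨⟨0, hn⟩⟩
  have hv : ∀ Γ p, HasDist Γ p →
      val Γ = (((1 / (n : ℝ)) * ∑ r, p r * ∑ k, ‖γ k r‖ ^ 2 : ℝ) : ℂ) := by
    intro Γ p hp
    have hs : ((Real.sqrt n : ℂ))⁻¹ * ((Real.sqrt n : ℂ))⁻¹ = 1 / (n : ℂ) := by
      rw [← mul_inv, ← Complex.ofReal_mul, Real.mul_self_sqrt hn0.le]
      simp
    have hM : ∀ pr qr : (Unit × Fin n) × Fin n,
        (∑ w : Fin n × Unit, ∑ w' : Fin n × Unit,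
            (Γ (Matrix.single w w' (1 : ℂ))) pr.1 qr.1
              * ξc w pr.2 * (starRingEnd ℂ) (ξc w' qr.2))
        = (1 / (n : ℂ)) * (Γ (Matrix.single (pr.2, ()) (qr.2, ()) (1 : ℂ))) pr.1 qr.1 := by
      intro pr qr
      rw [Finset.sum_eq_single (pr.2, ()), Finset.sum_eq_single (qr.2, ())]
      · simp only [hξc, if_true, map_inv₀, Complex.conj_ofReal]
        rw [mul_assoc, hs, mul_comm]
      · rintro ⟨a, _⟩ _ ha
        have : a ≠ qr.2 := fun h => ha (by rw [h])
        simp [hξc, this]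
      · simp
      · rintro ⟨a, _⟩ _ ha
        have : a ≠ pr.2 := fun h => ha (by rw [h])
        simp [hξc, this]
      · simp
    rw [hval, hPm]
    simp only [Matrix.trace, Matrix.diag_apply, Matrix.mul_apply, Matrix.of_apply, hM, hγc]
    have hin : ∀ pr qr : (Unit × Fin n) × Fin n,
        (1 / (n : ℂ)) * (Γ (Matrix.single (pr.2, ()) (qr.2, ()) (1 : ℂ))) pr.1 qr.1 *
          (∑ k, (if qr.1.2 = qr.2 then γ k qr.2 else 0) *
            (starRingEnd ℂ) (if pr.1.2 = pr.2 then γ k pr.2 else 0))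
        = if qr = pr then (if pr.1.2 = pr.2 then
            (1 / (n : ℂ)) * (p pr.2 * ∑ k, (‖γ k pr.2‖ : ℂ) ^ 2) else 0) else 0 := by
      rintro ⟨⟨_, b⟩, r⟩ ⟨⟨_, b'⟩, r'⟩
      by_cases h1 : b = r
      · by_cases h2 : b' = r'
        · subst h1 h2
          have := hp.2.2 b b'
          simp only [this]
          by_cases h3 : b = b'
          · subst h3
            simp only [if_true, Complex.mul_conj']
            rw [mul_assoc]
          · have h4 : b' ≠ b := fun h => h3 h.symm
            simp [h3, h4]
        · have h3 : ¬ (b' = b ∧ r' = r) := by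
            rintro ⟨rfl, rfl⟩; exact h2 h1
          simp [h2, h3]
      · simp [h1]
    simp only [hin]
    simp only [Finset.sum_ite_eq', Finset.mem_univ, if_true]
    rw [Fintype.sum_prod_type, Fintype.sum_prod_type]
    simp only [Finset.univ_unique, Finset.sum_singleton, Finset.sum_ite_eq, Finset.mem_univ,
      if_true]
    push_cast
    rw [Finset.mul_sum]
  refine ⟨sup_eq hn _ val hv _ dist_loc det_loc, sup_eq hn _ val hv _ dist_q det_q,
    sup_eq hn _ val hv _ dist_qc det_qc, ?_⟩
  congr 1
  have e : ∑ k, (D k)ᴴ * D k = Matrix.diagonal fun i => ((∑ k, ‖γ k i‖ ^ 2 : ℝ) : ℂ) := by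
    ext a b
    simp only [hD, Matrix.sum_apply, Matrix.diagonal_conjTranspose, Matrix.diagonal_mul_diagonal,
      Matrix.diagonal_apply]
    by_cases h : a = b
    · subst h
      simp [Complex.conj_mul']
    · simp [h]
  have e2 := Matrix.l2_opNorm_diagonal (𝕜 := ℂ) (fun i => ((∑ k, ‖γ k i‖ ^ 2 : ℝ) : ℂ))
  rw [Matrix.l2_opNorm_def] at e2
  rw [e]
  refine Eq.trans ?_ e2.symm
  have hnn : ∀ i, ‖((∑ k, ‖γ k i‖ ^ 2 : ℝ) : ℂ)‖ = ∑ k, ‖γ k i‖ ^ 2 := by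
    intro i
    rw [Complex.norm_real, Real.norm_of_nonneg (by positivity)]
  have hb : BddAbove (Set.range fun i => ∑ k, ‖γ k i‖ ^ 2) := (Set.finite_range _).bddAbove
  apply le_antisymm
  · refine ciSup_le fun i => ?_
    rw [← hnn i]
    exact norm_le_pi_norm (fun i => ((∑ k, ‖γ k i‖ ^ 2 : ℝ) : ℂ)) i
  · refine (pi_norm_le_iff_of_nonempty _).2 fun i => ?_
    rw [hnn i]
    exact le_ciSup hb i
end
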